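/- Let $\mathbb R_{\max}=\mathbb R\cup\{-\infty\}$, and for a matrix $M\in\mathbb R_{\max}^{d\times d}$ and a vector $v\in\mathbb R_{\max}^d$ let $(M\otimes v)_i=\max_j(M_{ij}+v_j)$. Let $(A(n))_{n\in\mathbb Z}$ be a stationary and ergodic sequence of random $d\times d$ matrices with entries in $\mathbb R_{\max}$, almost surely having at least one finite entry on each row, such that every coordinate of $A(0)\otimes 0$ is integrable, where $0$ is the zero vector. For $n\ge 1$ put $$x(n,0)=A(n-1)\otimes\cdots\otimes A(0)\otimes 0,\qquad y(n,0)=A(-1)\otimes\cdots\otimes A(-n)\otimes 0,$$ and let $\gamma(A)$ be the almost-sure limit of $\frac1n\max_i x_i(n,0)$. Then $\frac1n x(n,0)$ converges almost surely to $\gamma(A)\mathbf 1$ if and only if $\frac1n y(n,0)$ converges almost surely to $\gamma(A)\mathbf 1$, where $\mathbf 1$ is the all-ones vector. -/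

import Mathlib

open Filter MeasureTheory Topology

noncomputable section

/-- Max-plus action of a matrix on a vector: `(A ⊗ v) i = max_j (A i j + v j)`.
The semiring `ℝ_max = ℝ ∪ {-∞}` is realised inside `EReal`, as the elements different from `⊤`;
the supremum is over the finite set of indices, hence a maximum (and `⊥ = -∞` if `d = 0`). -/
def mpVec {d : ℕ} (A : Fin d → Fin d → EReal) (v : Fin d → EReal) : Fin d → EReal :=
  fun i => ⨆ j, A i j + v j

/-- `mpProdVec a m n v = a (m + n - 1) ⊗ ⋯ ⊗ a (m + 1) ⊗ a m ⊗ v` (a product of `n` matrices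
applied to `v`). -/
def mpProdVec {d : ℕ} (a : ℤ → Fin d → Fin d → EReal) (m : ℤ) :
    ℕ → (Fin d → EReal) → Fin d → EReal
  | 0, v => v
  | n + 1, v => mpVec (a (m + n)) (mpProdVec a m n v)

/-- `x(n, 0) = a (n - 1) ⊗ ⋯ ⊗ a 0 ⊗ 0`. -/
def xVec {d : ℕ} (a : ℤ → Fin d → Fin d → EReal) (n : ℕ) : Fin d → EReal :=
  mpProdVec a 0 n 0

/-- `y(n, 0) = a (-1) ⊗ ⋯ ⊗ a (-n) ⊗ 0`. -/
def yVec {d : ℕ} (a : ℤ → Fin d → Fin d → EReal) (n : ℕ) : Fin d → EReal :=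
  mpProdVec a (-(n : ℤ)) n 0

/-- The shift on two-sided sequences. -/
def seqShift {E : Type*} (a : ℤ → E) : ℤ → E := fun n => a (n + 1)

/-- A two-sided sequence `(A n)` of random variables is stationary and ergodic: its law on the
space of sequences (with the product σ-algebra) is invariant and ergodic under the shift. -/
structure IsStationaryErgodic {Ω E : Type*} [MeasurableSpace Ω] [MeasurableSpace E]
    (A : ℤ → Ω → E) (μ : Measure Ω) : Prop where
  measurable : ∀ n, Measurable (A n)
  ergodic : Ergodic (seqShift (E := E)) (μ.map fun ω n => A n ω)

end

/-!
Kingman's upper bound, `limsup g n / n ≤ inf (1/n) ∫ g n` almost surely for an integrable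
subadditive cocycle `g` over an ergodic map, is sharp: by Fatou's lemma, the almost sure limsup is
at most `γ` exactly when the infimum is at most `γ`. The infimum only involves the laws of the
individual `g n`, so it is the same for the time reversal `g n ∘ T^(-n)`, which is a subadditive
cocycle over `T⁻¹`. The largest coordinate of `x(n, 0)` and the opposite of its smallest one are
subadditive cocycles over the shift, and `y(n, 0)` is the time reversal of `x(n, 0)`. All
coordinates of `x(n, 0) / n` converge to `γ` when these two cocycles have limsups at most `γ`
and `-γ`, two conditions that therefore hold for `x` and `y` simultaneously.
-/

/-- A subadditive cocycle over `T`, in the sense of Kingman: `g (m + n) ≤ g m + g n ∘ T^[m]`,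
almost surely and simultaneously in all times. It is normalised by `g 0 = 0`, as for the products
of matrices indexed by an empty time interval. -/
structure IsSubadditiveCocycle {α : Type*} [MeasurableSpace α] (T : α → α) (μ : Measure α)
    (g : ℕ → α → ℝ) : Prop where
  zero : ∀ x, g 0 x = 0
  add_le : ∀ᵐ x ∂μ, ∀ m n, g (m + n) x ≤ g m x + g n (T^[m] x)

/-- The growth rate `inf_{n ≥ 1} (1/n) ∫ g n` in mean of a subadditive cocycle. It is taken in
`EReal` because the infimum may be `-∞`. -/
noncomputable def meanGrowthRate {α : Type*} [MeasurableSpace α] (μ : Measure α)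
    (g : ℕ → α → ℝ) : EReal :=
  ⨅ n : ℕ+, (((∫ x, g n x ∂μ) / (n : ℕ) : ℝ) : EReal)

section IntegralInvariance

variable {α E : Type*} [MeasurableSpace α] {μ : Measure α} {T : α → α}

theorem integral_comp_of_measurePreserving {β : Type*} [MeasurableSpace β] {ν : Measure β}
    [NormedAddCommGroup E] [NormedSpace ℝ E] {S : α → β} (hS : MeasurePreserving S μ ν) {f : β → E}
    (hf : AEStronglyMeasurable f ν) : ∫ x, f (S x) ∂μ = ∫ y, f y ∂ν := by
  rw [← hS.map_eq]
  exact (integral_map hS.aemeasurable (hS.map_eq.symm ▸ hf)).symm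

theorem integrable_birkhoffSum [NormedAddCommGroup E] (hT : MeasurePreserving T μ μ) {f : α → E}
    (hf : Integrable f μ) (n : ℕ) : Integrable (birkhoffSum T f n) μ :=
  integrable_finsetSum _ fun k _ => (hT.iterate k).integrable_comp_of_integrable hf

theorem integral_birkhoffSum [NormedAddCommGroup E] [NormedSpace ℝ E]
    (hT : MeasurePreserving T μ μ) {f : α → E} (hf : Integrable f μ) (n : ℕ) :
    ∫ x, birkhoffSum T f n x ∂μ = n • ∫ x, f x ∂μ := by
  have hsum := integral_finsetSum (μ := μ) (Finset.range n) (f := fun k x => f (T^[k] x))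
    fun k _ => (hT.iterate k).integrable_comp_of_integrable hf
  simpa [birkhoffSum, integral_comp_of_measurePreserving (hT.iterate _) hf.1] using hsum

theorem integrable_partialSups {g : ℕ → α → ℝ} (hg : ∀ n, Integrable (g n) μ) (n : ℕ) :
    Integrable (partialSups g n) μ := by
  induction n with
  | zero => simpa only [partialSups_zero] using hg 0
  | succ n ih => simpa only [partialSups_add_one] using ih.sup (hg (n + 1))

theorem integrable_ciSup_of_finite {ι : Type*} [Finite ι] [Nonempty ι] {f : ι → α → ℝ}
    (hf : ∀ i, Integrable (f i) μ) : Integrable (fun x => ⨆ i, f i x) μ := by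
  have := Fintype.ofFinite ι
  have hsup : (fun x => ⨆ i, f i x) = Finset.univ.sup' Finset.univ_nonempty f := by
    ext x
    rw [Finset.sup'_apply, Finset.sup'_univ_eq_ciSup]
  rw [hsup]
  exact Finset.sup'_induction (p := fun h => Integrable h μ) _ _ (fun _ h₁ _ h₂ => h₁.sup h₂)
    fun i _ => hf i

theorem nullMeasurableSet_bddAbove_range {g : ℕ → α → ℝ} (hg : ∀ n, AEMeasurable (g n) μ) :
    NullMeasurableSet {x | BddAbove (Set.range fun n => g n x)} μ := by
  refine (measurableSet_bddAbove_range fun n => (hg n).measurable_mk).nullMeasurableSet.congr ?_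
  filter_upwards [ae_all_iff.2 fun n => (hg n).ae_eq_mk] with x hx
  simp only [Set.ofPred, hx]

end IntegralInvariance

theorem eventually_lt_integral_of_ae_eventually_le {α : Type*} [MeasurableSpace α]
    {μ : Measure α} [IsProbabilityMeasure μ] {f : ℕ → α → ℝ} {b c : ℝ}
    (hf : ∀ n, Integrable (f n) μ) (hf_nonneg : ∀ᵐ x ∂μ, ∀ n, 0 ≤ f n x) (hbc : b < c)
    (hc : ∀ᵐ x ∂μ, ∀ᶠ n in atTop, c ≤ f n x) : ∀ᶠ n in atTop, b < ∫ x, f n x ∂μ := by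
  have hmin (n : ℕ) : Integrable (fun x => min (f n x) (max c 0)) μ :=
    (hf n).inf (integrable_const _)
  have hlim : Tendsto (fun n => ∫ x, min (f n x) (max c 0) ∂μ) atTop (𝓝 (∫ _, max c 0 ∂μ)) := by
    refine tendsto_integral_of_dominated_convergence (fun _ => max c 0) (fun n => (hmin n).1)
      (integrable_const _) (fun n => ?_) ?_
    · filter_upwards [hf_nonneg] with x hx
      rw [Real.norm_of_nonneg (le_min (hx n) (le_max_right c 0))]
      exact min_le_right _ _
    · filter_upwards [hf_nonneg, hc] with x hx hcx
      exact tendsto_const_nhds.congr' (hcx.mono fun n hn => (min_eq_right (max_le hn (hx n))).symm)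
  rw [integral_const, probReal_univ, one_smul] at hlim
  filter_upwards [hlim.eventually_const_lt (hbc.trans_le (le_max_left c 0))] with n hn
  exact hn.trans_le (integral_mono (hmin n) (hf n) fun x => min_le_left _ _)

theorem limsup_div_le_of_forall_le {u : ℕ → ℝ} {c C : ℝ} (hu : ∀ n : ℕ, u n ≤ n * c + C) :
    limsup (fun n : ℕ => ((u n / n : ℝ) : EReal)) atTop ≤ c := by
  have hlim : Tendsto (fun n : ℕ => ((c + C / n : ℝ) : EReal)) atTop (𝓝 c) := by
    rw [EReal.tendsto_coe]
    simpa using (tendsto_const_div_atTop_nhds_zero_nat C).const_add c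
  refine (limsup_le_limsup ?_).trans hlim.limsup_eq.le
  filter_upwards [eventually_gt_atTop 0] with n hn
  have hn : (0 : ℝ) < n := Nat.cast_pos.2 hn
  rw [EReal.coe_le_coe_iff, div_le_iff₀ hn, add_mul, div_mul_cancel₀ _ hn.ne', mul_comm c]
  exact hu n

theorem isSubadditiveCocycle_birkhoffSum {α : Type*} [MeasurableSpace α] (T : α → α)
    (μ : Measure α) (f : α → ℝ) : IsSubadditiveCocycle T μ (birkhoffSum T f) where
  zero := birkhoffSum_zero T f
  add_le := .of_forall fun x m n => (birkhoffSum_add T f m n x).le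

theorem meanGrowthRate_birkhoffSum {α : Type*} [MeasurableSpace α] {μ : Measure α} {T : α → α}
    (hT : MeasurePreserving T μ μ) {f : α → ℝ} (hf : Integrable f μ) :
    meanGrowthRate μ (birkhoffSum T f) = ((∫ x, f x ∂μ : ℝ) : EReal) := by
  simp [meanGrowthRate, integral_birkhoffSum hT hf]

namespace IsSubadditiveCocycle

variable {α : Type*} [MeasurableSpace α] {μ : Measure α} {T : α → α} {g l : ℕ → α → ℝ}

theorem ae_le_birkhoffSum (hg : IsSubadditiveCocycle T μ g) :
    ∀ᵐ x ∂μ, ∀ n, g n x ≤ birkhoffSum T (g 1) n x := by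
  filter_upwards [hg.add_le] with x hx n
  induction n with
  | zero => rw [hg.zero, birkhoffSum_zero]
  | succ n ih =>
    rw [birkhoffSum_succ]
    exact (hx n 1).trans (by gcongr)

theorem sub_natCast_mul (hg : IsSubadditiveCocycle T μ g) (c : ℝ) :
    IsSubadditiveCocycle T μ fun n x => g n x - n * c where
  zero x := by simp [hg.zero]
  add_le := by
    filter_upwards [hg.add_le] with x hx m n
    push_cast
    linarith [hx m n]

theorem integrable_of_nonneg_add (hT : MeasurePreserving T μ μ) (hg : IsSubadditiveCocycle T μ g)
    (hl : IsSubadditiveCocycle T μ l) (hgm : ∀ n, AEStronglyMeasurable (g n) μ)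
    (hg₁ : Integrable (g 1) μ) (hl₁ : Integrable (l 1) μ) (hgl : ∀ n x, 0 ≤ g n x + l n x)
    (n : ℕ) : Integrable (g n) μ := by
  refine integrable_of_le_of_le (hgm n) (g₁ := -birkhoffSum T (l 1) n) ?_
    (hg.ae_le_birkhoffSum.mono fun x hx => hx n)
    (integrable_birkhoffSum hT hl₁ n).neg (integrable_birkhoffSum hT hg₁ n)
  filter_upwards [hl.ae_le_birkhoffSum] with x hx
  have := hgl n x
  have := hx n
  simp only [Pi.neg_apply]
  linarith

theorem ae_bddAbove_or_ae_not_bddAbove [IsFiniteMeasure μ] (hT : Ergodic T μ)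
    (hg : IsSubadditiveCocycle T μ g) (hgm : ∀ n, AEMeasurable (g n) μ) :
    (∀ᵐ x ∂μ, BddAbove (Set.range fun n => g n x)) ∨
      ∀ᵐ x ∂μ, ¬ BddAbove (Set.range fun n => g n x) := by
  have hfin : T ⁻¹' {x | BddAbove (Set.range fun n => g n x)} ≤ᵐ[μ]
      {x | BddAbove (Set.range fun n => g n x)} := by
    filter_upwards [hg.add_le] with x hx ⟨C, hC⟩
    refine ⟨max (g 0 x) (g 1 x + C), ?_⟩
    rintro _ ⟨_ | n, rfl⟩
    · exact le_max_left _ _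
    · have : g (1 + n) x ≤ g 1 x + g n (T x) := hx 1 n
      rw [add_comm] at this
      exact le_max_of_le_right (this.trans (by gcongr; exact hC ⟨n, rfl⟩))
  rcases hT.ae_empty_or_univ_of_preimage_ae_le (nullMeasurableSet_bddAbove_range hgm) hfin with
    hempty | huniv
  · exact .inr (hempty.mono fun x hx => hx.mp)
  · exact .inl (eventuallyEq_univ.1 huniv)

theorem ae_partialSups_add_sub_le (hg : IsSubadditiveCocycle T μ g) (N : ℕ) :
    ∀ᵐ x ∂μ, ∀ n, partialSups g (n + N) x - partialSups g n (T^[N] x) ≤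
      max (partialSups g N x - partialSups g n (T^[N] x)) (g N x) := by
  filter_upwards [hg.add_le] with x hx n
  rw [sub_le_iff_le_add, Pi.partialSups_apply]
  refine partialSups_le _ _ _ fun k hk => ?_
  rcases le_total k N with hkN | hNk
  · have := le_partialSups_of_le g hkN x
    linarith [le_max_left (partialSups g N x - partialSups g n (T^[N] x)) (g N x)]
  · obtain ⟨l, rfl⟩ := Nat.exists_eq_add_of_le hNk
    have := le_partialSups_of_le g (by lia : l ≤ n) (T^[N] x)
    linarith [hx N l, le_max_right (partialSups g N x - partialSups g n (T^[N] x)) (g N x)]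

theorem integral_max_partialSups_sub_nonneg (hT : MeasurePreserving T μ μ)
    (hg : IsSubadditiveCocycle T μ g) (hgi : ∀ n, Integrable (g n) μ) (N n : ℕ) :
    0 ≤ ∫ x, max (partialSups g N x - partialSups g n (T^[N] x)) (g N x) ∂μ := by
  have hM := integrable_partialSups hgi
  have hMT : Integrable (fun x => partialSups g n (T^[N] x)) μ :=
    (hT.iterate N).integrable_comp_of_integrable (hM n)
  calc 0 ≤ ∫ x, partialSups g (n + N) x ∂μ - ∫ x, partialSups g n x ∂μ :=
        sub_nonneg.2 <| integral_mono (hM n) (hM (n + N)) <|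
          (partialSups g).monotone (Nat.le_add_right n N)
    _ = ∫ x, partialSups g (n + N) x - partialSups g n (T^[N] x) ∂μ := by
        rw [integral_sub (hM _) hMT, integral_comp_of_measurePreserving (hT.iterate N) (hM n).1]
    _ ≤ _ := integral_mono_ae ((hM _).sub hMT) (((hM N).sub hMT).sup (hgi N)) <|
        (hg.ae_partialSups_add_sub_le N).mono fun x hx => hx n

theorem partialSups_nonneg (hg : IsSubadditiveCocycle T μ g) (n : ℕ) (x : α) :
    0 ≤ partialSups g n x :=
  (hg.zero x).ge.trans (le_partialSups_of_le g n.zero_le x)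

theorem tendsto_integral_max_partialSups_sub (hT : MeasurePreserving T μ μ)
    (hg : IsSubadditiveCocycle T μ g) (hgi : ∀ n, Integrable (g n) μ)
    (hunbdd : ∀ᵐ x ∂μ, ¬ BddAbove (Set.range fun n => g n x)) (N : ℕ) :
    Tendsto (fun n => ∫ x, max (partialSups g N x - partialSups g n (T^[N] x)) (g N x) ∂μ) atTop
      (𝓝 (∫ x, g N x ∂μ)) := by
  have hTN := hT.iterate N
  have hM := integrable_partialSups hgi
  refine tendsto_integral_of_dominated_convergence (fun x => partialSups g N x + |g N x|)
    (fun n => (((hM N).sub (hTN.integrable_comp_of_integrable (hM n))).sup (hgi N)).1)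
    ((hM N).add (hgi N).abs) (fun n => .of_forall fun x => ?_) ?_
  · have hN := hg.partialSups_nonneg N x
    have hn := hg.partialSups_nonneg n (T^[N] x)
    rw [Real.norm_eq_abs, abs_le]
    constructor
    · linarith [neg_abs_le (g N x), le_max_right (partialSups g N x - partialSups g n (T^[N] x))
        (g N x)]
    · exact max_le (by linarith [abs_nonneg (g N x)]) (by linarith [le_abs_self (g N x)])
  · filter_upwards [hTN.quasiMeasurePreserving.ae hunbdd] with x hx
    obtain ⟨_, ⟨k, rfl⟩, hk⟩ := not_bddAbove_iff.1 hx (partialSups g N x - g N x)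
    refine tendsto_const_nhds.congr' ?_
    filter_upwards [eventually_ge_atTop k] with n hn
    have := le_partialSups_of_le g hn (T^[N] x)
    exact (max_eq_right (by linarith)).symm

/- If `g` is unbounded almost surely, then so are its partial suprema `M n`, and integrating
`M (n + N) - M n ∘ T^N ≤ max (M N - M n ∘ T^N) (g N)`, whose left-hand side has a nonnegative
integral, gives `0 ≤ ∫ g N` as `n → ∞`. -/
theorem ae_bddAbove_of_integral_neg [IsFiniteMeasure μ] (hT : Ergodic T μ)
    (hg : IsSubadditiveCocycle T μ g) (hgi : ∀ n, Integrable (g n) μ) {N : ℕ}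
    (hN : ∫ x, g N x ∂μ < 0) : ∀ᵐ x ∂μ, BddAbove (Set.range fun n => g n x) := by
  refine (hg.ae_bddAbove_or_ae_not_bddAbove hT fun n => (hgi n).aemeasurable).resolve_right
    fun hunbdd => hN.not_ge ?_
  exact ge_of_tendsto' (hg.tendsto_integral_max_partialSups_sub hT.toMeasurePreserving hgi hunbdd N)
    (hg.integral_max_partialSups_sub_nonneg hT.toMeasurePreserving hgi N)

variable [IsProbabilityMeasure μ]

theorem ae_exists_forall_le (hT : Ergodic T μ) (hg : IsSubadditiveCocycle T μ g)
    (hgi : ∀ n, Integrable (g n) μ) {c : ℝ} (hc : meanGrowthRate μ g < c) :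
    ∀ᵐ x ∂μ, ∃ C, ∀ n : ℕ, g n x ≤ n * c + C := by
  obtain ⟨N, hN⟩ := iInf_lt_iff.1 hc
  rw [EReal.coe_lt_coe_iff, div_lt_iff₀ (Nat.cast_pos.2 N.pos), mul_comm] at hN
  have hneg : ∫ x, (g N x - (N : ℕ) * c) ∂μ < 0 := by
    rw [integral_sub (hgi N) (integrable_const _)]
    simpa using hN
  filter_upwards [(hg.sub_natCast_mul c).ae_bddAbove_of_integral_neg hT
    (fun n => (hgi n).sub (integrable_const _)) hneg] with x ⟨C, hC⟩
  exact ⟨C, fun n => sub_le_iff_le_add'.1 (hC ⟨n, rfl⟩)⟩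

theorem ae_limsup_div_le_meanGrowthRate (hT : Ergodic T μ) (hg : IsSubadditiveCocycle T μ g)
    (hgi : ∀ n, Integrable (g n) μ) :
    ∀ᵐ x ∂μ, limsup (fun n : ℕ => ((g n x / n : ℝ) : EReal)) atTop ≤ meanGrowthRate μ g := by
  have hrat : ∀ᵐ x ∂μ, ∀ q : ℚ, meanGrowthRate μ g < (q : ℝ) →
      limsup (fun n : ℕ => ((g n x / n : ℝ) : EReal)) atTop ≤ (q : ℝ) := by
    refine ae_all_iff.2 fun q => ?_
    by_cases hq : meanGrowthRate μ g < (q : ℝ)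
    · filter_upwards [hg.ae_exists_forall_le hT hgi hq] with x ⟨C, hC⟩ _
      exact limsup_div_le_of_forall_le hC
    · exact .of_forall fun _ h => absurd h hq
  filter_upwards [hrat] with x hx
  refine le_of_forall_gt_imp_ge_of_dense fun c hc => ?_
  obtain ⟨q, hq, hqc⟩ := EReal.lt_iff_exists_rat_btwn.1 hc
  exact (hx q hq).trans hqc.le

end IsSubadditiveCocycle

theorem ae_eventually_lt_birkhoffSum_div {α : Type*} [MeasurableSpace α] {μ : Measure α}
    [IsProbabilityMeasure μ] {T : α → α} (hT : Ergodic T μ) {f : α → ℝ} (hf : Integrable f μ)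
    {b : ℝ} (hb : b < ∫ x, f x ∂μ) : ∀ᵐ x ∂μ, ∀ᶠ n : ℕ in atTop, b < birkhoffSum T f n x / n := by
  have hT' := hT.toMeasurePreserving
  filter_upwards [(isSubadditiveCocycle_birkhoffSum T μ (-f)).ae_limsup_div_le_meanGrowthRate hT
    (integrable_birkhoffSum hT' hf.neg)] with x hx
  rw [meanGrowthRate_birkhoffSum hT' hf.neg] at hx
  have hlt : ((∫ x, (-f) x ∂μ : ℝ) : EReal) < ((-b : ℝ) : EReal) := by
    rw [EReal.coe_lt_coe_iff]
    simpa [integral_neg] using hb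
  filter_upwards [eventually_lt_of_limsup_lt (hx.trans_lt hlt)] with n hn
  rw [EReal.coe_lt_coe_iff, birkhoffSum_neg, neg_div] at hn
  exact neg_lt_neg_iff.1 hn

namespace IsSubadditiveCocycle

variable {α : Type*} [MeasurableSpace α] {μ : Measure α} [IsProbabilityMeasure μ] {T : α → α}
  {g : ℕ → α → ℝ}

theorem meanGrowthRate_le_of_ae_eventually_lt (hT : Ergodic T μ) (hg : IsSubadditiveCocycle T μ g)
    (hgi : ∀ n, Integrable (g n) μ) {c : ℝ}
    (hc : ∀ᵐ x ∂μ, ∀ᶠ n : ℕ in atTop, g n x / n < c) : meanGrowthRate μ g ≤ c := by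
  refine EReal.le_of_forall_lt_iff_le.1 fun c' hc' => ?_
  have hT' := hT.toMeasurePreserving
  let B : ℝ := ∫ x, g 1 x ∂μ
  obtain ⟨ε, hε, hεc⟩ := exists_between (sub_pos.2 (EReal.coe_lt_coe_iff.1 hc'))
  -- The gap to the Birkhoff averages of `g 1` is nonnegative by subadditivity, so that its
  -- pointwise lower bound passes to the integrals; those of the Birkhoff averages are constant.
  let gap (n : ℕ) (x : α) : ℝ := birkhoffSum T (g 1) n x / n - g n x / n
  have hgap : ∀ n, Integrable (gap n) μ := fun n =>
    ((integrable_birkhoffSum hT' (hgi 1) n).div_const _).sub ((hgi n).div_const _)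
  have hgap_nonneg : ∀ᵐ x ∂μ, ∀ n, 0 ≤ gap n x := by
    filter_upwards [hg.ae_le_birkhoffSum] with x hx n
    exact sub_nonneg.2 (div_le_div_of_nonneg_right (hx n) n.cast_nonneg)
  have hgap_large : ∀ᵐ x ∂μ, ∀ᶠ n in atTop, B - ε - c ≤ gap n x := by
    filter_upwards [hc, ae_eventually_lt_birkhoffSum_div hT (hgi 1) (sub_lt_self B hε)]
      with x hgx hBx
    filter_upwards [hgx, hBx] with n hgn hBn
    exact (sub_lt_sub hBn hgn).le
  obtain ⟨n, hn, hn₀⟩ := ((eventually_lt_integral_of_ae_eventually_le hgap hgap_nonneg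
    (by linarith : B - c' < B - ε - c) hgap_large).and (eventually_gt_atTop 0)).exists
  have hgap_integral : ∫ x, gap n x ∂μ = B - (∫ x, g n x ∂μ) / n := by
    rw [integral_sub ((integrable_birkhoffSum hT' (hgi 1) n).div_const _) ((hgi n).div_const _),
      integral_div, integral_div, integral_birkhoffSum hT' (hgi 1), nsmul_eq_mul,
      mul_div_cancel_left₀ _ (Nat.cast_ne_zero.2 hn₀.ne')]
  exact (iInf_le _ ⟨n, hn₀⟩).trans (EReal.coe_le_coe_iff.2 (by dsimp only [PNat.mk_coe]; linarith))

theorem ae_limsup_div_le_iff (hT : Ergodic T μ) (hg : IsSubadditiveCocycle T μ g)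
    (hgi : ∀ n, Integrable (g n) μ) {γ : EReal} :
    (∀ᵐ x ∂μ, limsup (fun n : ℕ => ((g n x / n : ℝ) : EReal)) atTop ≤ γ) ↔
      meanGrowthRate μ g ≤ γ := by
  refine ⟨fun hγ => EReal.le_of_forall_lt_iff_le.1 fun c hc => ?_, fun hγ =>
    (hg.ae_limsup_div_le_meanGrowthRate hT hgi).mono fun x hx => hx.trans hγ⟩
  refine hg.meanGrowthRate_le_of_ae_eventually_lt hT hgi ?_
  filter_upwards [hγ] with x hx
  simpa only [EReal.coe_lt_coe_iff] using eventually_lt_of_limsup_lt (hx.trans_lt hc)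

end IsSubadditiveCocycle

section TimeReversal

variable {α : Type*} [MeasurableSpace α] {μ : Measure α} {e : α ≃ᵐ α} {g : ℕ → α → ℝ}

theorem IsSubadditiveCocycle.timeReversal (he : MeasurePreserving e μ μ)
    (hg : IsSubadditiveCocycle e μ g) :
    IsSubadditiveCocycle e.symm μ fun n x => g n (e.symm^[n] x) where
  zero x := hg.zero x
  add_le := by
    have hae := ae_all_iff.2 fun k =>
      ((he.symm e).iterate k).quasiMeasurePreserving.ae hg.add_le
    filter_upwards [hae] with x hx m n
    have hcancel : e^[n] (e.symm^[n + m] x) = e.symm^[m] x := by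
      rw [Function.iterate_add_apply]
      exact Function.LeftInverse.iterate e.apply_symm_apply n _
    have := hx (n + m) n m
    rw [hcancel] at this
    rw [← Function.iterate_add_apply, add_comm m n, add_comm (g m _)]
    exact this

theorem meanGrowthRate_timeReversal (he : MeasurePreserving e μ μ)
    (hgm : ∀ n, AEStronglyMeasurable (g n) μ) :
    meanGrowthRate μ (fun n x => g n (e.symm^[n] x)) = meanGrowthRate μ g := by
  simp only [meanGrowthRate,
    integral_comp_of_measurePreserving ((he.symm e).iterate _) (hgm _)]

theorem IsSubadditiveCocycle.ae_limsup_div_le_iff_timeReversal [IsProbabilityMeasure μ]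
    (he : Ergodic e μ) (hg : IsSubadditiveCocycle e μ g) (hgi : ∀ n, Integrable (g n) μ)
    {γ : EReal} :
    (∀ᵐ x ∂μ, limsup (fun n : ℕ => ((g n x / n : ℝ) : EReal)) atTop ≤ γ) ↔
      ∀ᵐ x ∂μ, limsup (fun n : ℕ => ((g n (e.symm^[n] x) / n : ℝ) : EReal)) atTop ≤ γ := by
  have he' := he.toMeasurePreserving
  have hgi' : ∀ n, Integrable (fun x => g n (e.symm^[n] x)) μ := fun n =>
    ((he'.symm e).iterate n).integrable_comp_of_integrable (hgi n)
  rw [hg.ae_limsup_div_le_iff he hgi, (hg.timeReversal he').ae_limsup_div_le_iff he.symm hgi',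
    meanGrowthRate_timeReversal he' fun n => (hgi n).1]

end TimeReversal

section Coordinates

variable {ι : Type*}

/-- The largest coordinate of a vector over `ℝ_max`, as a real number. It is meaningful for vectors
without infinite coordinates; the smallest coordinate is then `-maxCoord (-v)`. -/
noncomputable def maxCoord (v : ι → EReal) : ℝ :=
  ⨆ i, (v i).toReal

theorem maxCoord_zero : maxCoord (0 : ι → EReal) = 0 := by
  simp [maxCoord]

theorem measurable_maxCoord [Countable ι] : Measurable (maxCoord (ι := ι)) :=
  Measurable.iSup fun i => (measurable_pi_apply i).ereal_toReal

variable [Finite ι] [Nonempty ι]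

theorem coe_maxCoord {v : ι → EReal} (hv : ∀ i, v i ≠ ⊤ ∧ v i ≠ ⊥) :
    (maxCoord v : EReal) = ⨆ i, v i := by
  rw [maxCoord, Finite.map_iSup_of_monotone _ EReal.coe_strictMono.monotone]
  simp only [EReal.coe_toReal (hv _).1 (hv _).2]

theorem maxCoord_add_maxCoord_neg_nonneg (v : ι → EReal) : 0 ≤ maxCoord v + maxCoord (-v) := by
  obtain ⟨i⟩ := ‹Nonempty ι›
  have hpos : (v i).toReal ≤ maxCoord v :=
    le_ciSup (f := fun i => (v i).toReal) (Set.finite_range _).bddAbove i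
  have hneg : ((-v) i).toReal ≤ maxCoord (-v) :=
    le_ciSup (f := fun i => ((-v) i).toReal) (Set.finite_range _).bddAbove i
  rw [Pi.neg_apply, EReal.toReal_neg_eq] at hneg
  linarith

theorem integrable_maxCoord {α : Type*} [MeasurableSpace α] {μ : Measure α} {F : α → ι → EReal}
    (hF : ∀ i, Integrable (fun x => (F x i).toReal) μ) : Integrable (fun x => maxCoord (F x)) μ :=
  integrable_ciSup_of_finite hF

theorem limsup_maxCoord_div_le_iff {u : ℕ → ι → EReal} (hu : ∀ n i, u n i ≠ ⊤ ∧ u n i ≠ ⊥)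
    {γ : EReal} :
    limsup (fun n : ℕ => ((maxCoord (u n) / n : ℝ) : EReal)) atTop ≤ γ ↔
      ∀ i, limsup (fun n : ℕ => u n i / (n : EReal)) atTop ≤ γ := by
  have := Fintype.ofFinite ι
  have hdiv (n : ℕ) : ((maxCoord (u n) / n : ℝ) : EReal) =
      Finset.univ.sup fun i => u n i / (n : EReal) := by
    rw [EReal.coe_div, coe_maxCoord (hu n), EReal.coe_natCast, Finset.sup_univ_eq_iSup]
    exact Finite.map_iSup_of_monotone _ (EReal.monotone_div_right_of_nonneg (by positivity))
  simp only [hdiv]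
  rw [limsup_finset_sup]
  simp only [Finset.sup_le_iff, Finset.mem_univ, true_imp_iff]

theorem forall_tendsto_div_iff {u : ℕ → ι → EReal} (hu : ∀ n i, u n i ≠ ⊤ ∧ u n i ≠ ⊥)
    {γ : EReal} :
    (∀ i, Tendsto (fun n : ℕ => u n i / (n : EReal)) atTop (𝓝 γ)) ↔
      limsup (fun n : ℕ => ((maxCoord (u n) / n : ℝ) : EReal)) atTop ≤ γ ∧
        limsup (fun n : ℕ => ((maxCoord (-u n) / n : ℝ) : EReal)) atTop ≤ -γ := by
  have hneg (i : ι) : limsup (fun n : ℕ => (-u n) i / (n : EReal)) atTop =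
      -liminf (fun n : ℕ => u n i / (n : EReal)) atTop := by
    rw [← EReal.limsup_neg]
    simp only [Pi.neg_def, div_eq_mul_inv, neg_mul]
  rw [limsup_maxCoord_div_le_iff hu, limsup_maxCoord_div_le_iff (u := fun n => -u n)
    (by simpa [and_comm] using hu), ← forall_and]
  simp only [hneg, EReal.neg_le_neg_iff]
  exact forall_congr' fun i => ⟨fun h => ⟨h.limsup_eq.le, h.liminf_eq.ge⟩,
    fun h => tendsto_of_le_liminf_of_limsup_le h.2 h.1⟩

theorem ae_forall_tendsto_div_iff_timeReversal {α : Type*} [MeasurableSpace α] {μ : Measure α}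
    [IsProbabilityMeasure μ] {e : α ≃ᵐ α} (he : Ergodic e μ) {F : ℕ → α → ι → EReal}
    (hfin : ∀ᵐ x ∂μ, ∀ n i, F n x i ≠ ⊤ ∧ F n x i ≠ ⊥)
    (hmax : IsSubadditiveCocycle e μ fun n x => maxCoord (F n x))
    (hmin : IsSubadditiveCocycle e μ fun n x => maxCoord (-F n x))
    (hmax_int : ∀ n, Integrable (fun x => maxCoord (F n x)) μ)
    (hmin_int : ∀ n, Integrable (fun x => maxCoord (-F n x)) μ) {γ : EReal} :
    (∀ᵐ x ∂μ, ∀ i, Tendsto (fun n : ℕ => F n x i / (n : EReal)) atTop (𝓝 γ)) ↔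
      ∀ᵐ x ∂μ, ∀ i, Tendsto (fun n : ℕ => F n (e.symm^[n] x) i / (n : EReal)) atTop (𝓝 γ) := by
  have hfin_symm : ∀ᵐ x ∂μ, ∀ n i, F n (e.symm^[n] x) i ≠ ⊤ ∧ F n (e.symm^[n] x) i ≠ ⊥ :=
    ae_all_iff.2 fun n => (he.symm.toMeasurePreserving.iterate n).quasiMeasurePreserving.ae <|
      hfin.mono fun x hx => hx n
  rw [eventually_congr (hfin.mono fun x hx => forall_tendsto_div_iff hx),
    eventually_congr (hfin_symm.mono fun x hx => forall_tendsto_div_iff hx), eventually_and,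
    eventually_and, hmax.ae_limsup_div_le_iff_timeReversal he hmax_int,
    hmin.ae_limsup_div_le_iff_timeReversal he hmin_int]

end Coordinates

section MaxPlus

variable {d : ℕ}

theorem mpVec_mono (A : Fin d → Fin d → EReal) : Monotone (mpVec A) :=
  fun _ _ hvw _ => iSup_mono fun j => add_le_add_right (hvw j) _

theorem mpVec_const_add (A : Fin d → Fin d → EReal) (c : EReal) (v : Fin d → EReal) :
    mpVec A (fun j => c + v j) = fun i => c + mpVec A v i := by
  ext i
  have : Nonempty (Fin d) := ⟨i⟩
  simp only [mpVec, add_left_comm _ c]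
  exact (Finite.map_iSup_of_monotone _ fun _ _ h => add_le_add_right h c).symm

theorem mpProdVec_mono (a : ℤ → Fin d → Fin d → EReal) (m : ℤ) (n : ℕ) :
    Monotone (mpProdVec a m n) := by
  induction n with
  | zero => exact monotone_id
  | succ n ih => exact (mpVec_mono _).comp ih

theorem mpProdVec_const_add (a : ℤ → Fin d → Fin d → EReal) (m : ℤ) (n : ℕ) (c : EReal)
    (v : Fin d → EReal) :
    mpProdVec a m n (fun j => c + v j) = fun i => c + mpProdVec a m n v i := by
  induction n with
  | zero => rfl
  | succ n ih => rw [mpProdVec, ih, mpVec_const_add, mpProdVec]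

theorem mpProdVec_const (a : ℤ → Fin d → Fin d → EReal) (m : ℤ) (n : ℕ) (c : EReal) :
    mpProdVec a m n (fun _ => c) = fun i => c + mpProdVec a m n 0 i := by
  simpa using mpProdVec_const_add a m n c 0

theorem mpProdVec_add (a : ℤ → Fin d → Fin d → EReal) (m : ℤ) (n k : ℕ) (v : Fin d → EReal) :
    mpProdVec a m (n + k) v = mpProdVec a (m + n) k (mpProdVec a m n v) := by
  induction k with
  | zero => rfl
  | succ k ih => rw [← add_assoc, mpProdVec, mpProdVec, ih, Nat.cast_add, add_assoc]

theorem measurable_mpVec :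
    Measurable fun p : (Fin d → Fin d → EReal) × (Fin d → EReal) => mpVec p.1 p.2 := by
  unfold mpVec
  fun_prop

theorem measurable_mpProdVec (m : ℤ) (n : ℕ) (v : Fin d → EReal) :
    Measurable fun a : ℤ → Fin d → Fin d → EReal => mpProdVec a m n v := by
  induction n with
  | zero => exact measurable_const
  | succ n ih => exact measurable_mpVec.comp ((measurable_pi_apply (m + n)).prodMk ih)

/-- All matrices of the sequence have entries in `ℝ_max` and at least one finite entry on each
row. -/
def RowFinite (a : ℤ → Fin d → Fin d → EReal) : Prop :=
  ∀ n i, (∀ j, a n i j ≠ ⊤) ∧ ∃ j, a n i j ≠ ⊥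

theorem measurableSet_rowFinite :
    MeasurableSet {a : ℤ → Fin d → Fin d → EReal | RowFinite a} := by
  simp only [RowFinite, Set.ofPred_forall, Set.ofPred_and, Set.ofPred_exists]
  have hentry (n : ℤ) (i j : Fin d) : Measurable fun a : ℤ → Fin d → Fin d → EReal => a n i j := by
    fun_prop
  exact .iInter fun n => .iInter fun i =>
    .inter (.iInter fun j => hentry n i j (measurableSet_singleton ⊤).compl)
      (.iUnion fun j => hentry n i j (measurableSet_singleton ⊥).compl)

namespace RowFinite

variable {a : ℤ → Fin d → Fin d → EReal}

theorem mpProdVec_ne (ha : RowFinite a) (m : ℤ) (n : ℕ) (i : Fin d) :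
    mpProdVec a m n 0 i ≠ ⊤ ∧ mpProdVec a m n 0 i ≠ ⊥ := by
  induction n generalizing i with
  | zero => simp [mpProdVec]
  | succ n ih =>
    have : Nonempty (Fin d) := ⟨i⟩
    obtain ⟨k, hk⟩ := exists_eq_ciSup_of_finite (f := fun j => a (m + n) i j + mpProdVec a m n 0 j)
    obtain ⟨j, hj⟩ := (ha (m + n) i).2
    rw [mpProdVec, mpVec]
    refine ⟨hk ▸ EReal.add_ne_top ((ha _ i).1 k) (ih k).1, ne_bot_of_le_ne_bot ?_
      (le_iSup (fun j => a (m + n) i j + mpProdVec a m n 0 j) j)⟩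
    exact EReal.add_ne_bot_iff.2 ⟨hj, (ih j).2⟩

theorem neg_mpProdVec_ne (ha : RowFinite a) (m : ℤ) (n : ℕ) (i : Fin d) :
    (-mpProdVec a m n 0) i ≠ ⊤ ∧ (-mpProdVec a m n 0) i ≠ ⊥ := by
  simpa [and_comm] using ha.mpProdVec_ne m n i

variable [NeZero d]

theorem maxCoord_mpProdVec_add_le (ha : RowFinite a) (m : ℤ) (n k : ℕ) :
    maxCoord (mpProdVec a m (n + k) 0) ≤
      maxCoord (mpProdVec a m n 0) + maxCoord (mpProdVec a (m + n) k 0) := by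
  rw [← EReal.coe_le_coe_iff, EReal.coe_add, coe_maxCoord (ha.mpProdVec_ne _ _),
    coe_maxCoord (ha.mpProdVec_ne (m + n) k)]
  refine iSup_le fun i => ?_
  have hle : mpProdVec a m n 0 ≤ fun _ => (maxCoord (mpProdVec a m n 0) : EReal) := by
    rw [coe_maxCoord (ha.mpProdVec_ne m n)]
    exact fun j => le_iSup _ j
  calc mpProdVec a m (n + k) 0 i
      ≤ mpProdVec a (m + n) k (fun _ => (maxCoord (mpProdVec a m n 0) : EReal)) i := by
        rw [mpProdVec_add]
        exact mpProdVec_mono a (m + n) k hle i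
    _ = maxCoord (mpProdVec a m n 0) + mpProdVec a (m + n) k 0 i := by rw [mpProdVec_const]
    _ ≤ _ := add_le_add_right (le_iSup (mpProdVec a (m + n) k 0) i) _

theorem maxCoord_neg_mpProdVec_add_le (ha : RowFinite a) (m : ℤ) (n k : ℕ) :
    maxCoord (-mpProdVec a m (n + k) 0) ≤
      maxCoord (-mpProdVec a m n 0) + maxCoord (-mpProdVec a (m + n) k 0) := by
  set c := maxCoord (-mpProdVec a m n 0) with hc
  rw [← EReal.coe_le_coe_iff, EReal.coe_add, coe_maxCoord (ha.neg_mpProdVec_ne _ _),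
    coe_maxCoord (ha.neg_mpProdVec_ne (m + n) k)]
  refine iSup_le fun i => ?_
  have hle : (fun _ => -(c : EReal)) ≤ mpProdVec a m n 0 := by
    rw [hc, coe_maxCoord (ha.neg_mpProdVec_ne m n)]
    exact fun j => EReal.neg_le.1 (le_iSup (-mpProdVec a m n 0) j)
  calc -mpProdVec a m (n + k) 0 i
      ≤ -mpProdVec a (m + n) k (fun _ => -(c : EReal)) i := by
        rw [mpProdVec_add, EReal.neg_le_neg_iff]
        exact mpProdVec_mono a (m + n) k hle i
    _ = c + -mpProdVec a (m + n) k 0 i := by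
        rw [mpProdVec_const, EReal.neg_add (by simp) (by simp), neg_neg, sub_eq_add_neg]
    _ ≤ _ := add_le_add_right (le_iSup (-mpProdVec a (m + n) k 0) i) _

end RowFinite

theorem mpProdVec_seqShift (a : ℤ → Fin d → Fin d → EReal) (m : ℤ) (n : ℕ) (v : Fin d → EReal) :
    mpProdVec (seqShift a) m n v = mpProdVec a (m + 1) n v := by
  induction n with
  | zero => rfl
  | succ n ih => rw [mpProdVec, mpProdVec, ih, seqShift, add_right_comm]

theorem mpProdVec_iterate_seqShift (a : ℤ → Fin d → Fin d → EReal) (m : ℤ) (k n : ℕ)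
    (v : Fin d → EReal) : mpProdVec (seqShift^[k] a) m n v = mpProdVec a (m + k) n v := by
  induction k generalizing m with
  | zero => simp
  | succ k ih =>
    rw [Function.iterate_succ_apply', mpProdVec_seqShift, ih, Nat.cast_succ, add_right_comm,
      add_assoc]

/-- The two-sided shift as a measurable equivalence, whose inverse moves time backwards. -/
def seqShiftEquiv (E : Type*) [MeasurableSpace E] : (ℤ → E) ≃ᵐ (ℤ → E) where
  toFun := seqShift
  invFun a n := a (n - 1)
  left_inv a := by ext n; simp [seqShift]
  right_inv a := by ext n; simp [seqShift]
  measurable_toFun := measurable_pi_lambda _ fun n => measurable_pi_apply (n + 1)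
  measurable_invFun := measurable_pi_lambda _ fun n => measurable_pi_apply (n - 1)

theorem yVec_eq_xVec (a : ℤ → Fin d → Fin d → EReal) (n : ℕ) :
    yVec a n = xVec ((seqShiftEquiv _).symm^[n] a) n := by
  have hcancel : seqShift^[n] ((seqShiftEquiv _).symm^[n] a) = a :=
    Function.LeftInverse.iterate (seqShiftEquiv (Fin d → Fin d → EReal)).apply_symm_apply n a
  conv_lhs => rw [← hcancel]
  rw [yVec, xVec, mpProdVec_iterate_seqShift, neg_add_cancel]

theorem measurable_xVec (n : ℕ) : Measurable fun a : ℤ → Fin d → Fin d → EReal => xVec a n :=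
  measurable_mpProdVec 0 n 0

theorem measurable_yVec (n : ℕ) : Measurable fun a : ℤ → Fin d → Fin d → EReal => yVec a n :=
  measurable_mpProdVec _ n 0

theorem measurableSet_forall_tendsto_div {α ι : Type*} [Countable ι] [MeasurableSpace α]
    {F : ℕ → α → ι → EReal} (hF : ∀ n, Measurable (F n)) (γ : EReal) :
    MeasurableSet {x | ∀ i, Tendsto (fun n : ℕ => F n x i / (n : EReal)) atTop (𝓝 γ)} := by
  simp only [Set.ofPred_forall]
  exact .iInter fun i => measurableSet_tendsto (𝓝 γ) fun n =>
    ((measurable_pi_apply i).comp (hF n)).mul_const _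

end MaxPlus

section StationaryErgodicProducts

variable {d : ℕ} [NeZero d] {ν : Measure (ℤ → Fin d → Fin d → EReal)}

theorem isSubadditiveCocycle_maxCoord_xVec (hν : ∀ᵐ a ∂ν, RowFinite a) :
    IsSubadditiveCocycle seqShift ν fun n a => maxCoord (xVec a n) where
  zero _ := maxCoord_zero
  add_le := hν.mono fun a ha m n => by
    simpa only [xVec, mpProdVec_iterate_seqShift] using ha.maxCoord_mpProdVec_add_le 0 m n

theorem isSubadditiveCocycle_maxCoord_neg_xVec (hν : ∀ᵐ a ∂ν, RowFinite a) :
    IsSubadditiveCocycle seqShift ν fun n a => maxCoord (-xVec a n) where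
  zero _ := (congrArg maxCoord neg_zero).trans maxCoord_zero
  add_le := hν.mono fun a ha m n => by
    simpa only [xVec, mpProdVec_iterate_seqShift] using ha.maxCoord_neg_mpProdVec_add_le 0 m n

theorem ae_forall_tendsto_xVec_div_iff_yVec [IsProbabilityMeasure ν] (hν : Ergodic seqShift ν)
    (hfin : ∀ᵐ a ∂ν, RowFinite a) (hint : ∀ i, Integrable (fun a => (xVec a 1 i).toReal) ν)
    {γ : EReal} :
    (∀ᵐ a ∂ν, ∀ i, Tendsto (fun n : ℕ => xVec a n i / (n : EReal)) atTop (𝓝 γ)) ↔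
      ∀ᵐ a ∂ν, ∀ i, Tendsto (fun n : ℕ => yVec a n i / (n : EReal)) atTop (𝓝 γ) := by
  have hmax := isSubadditiveCocycle_maxCoord_xVec hfin
  have hmin := isSubadditiveCocycle_maxCoord_neg_xVec hfin
  have hmax_meas (n : ℕ) : AEStronglyMeasurable (fun a => maxCoord (xVec a n)) ν :=
    (measurable_maxCoord.comp (measurable_xVec n)).aestronglyMeasurable
  have hmin_meas (n : ℕ) : AEStronglyMeasurable (fun a => maxCoord (-xVec a n)) ν :=
    (measurable_maxCoord.comp (measurable_xVec n).neg).aestronglyMeasurable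
  have hmax₁ : Integrable (fun a => maxCoord (xVec a 1)) ν := integrable_maxCoord hint
  have hmin₁ : Integrable (fun a => maxCoord (-xVec a 1)) ν := integrable_maxCoord fun i => by
    simpa only [Pi.neg_apply, EReal.toReal_neg_eq, Pi.neg_def] using (hint i).neg
  simp only [yVec_eq_xVec]
  exact ae_forall_tendsto_div_iff_timeReversal (e := seqShiftEquiv _) hν
    (hfin.mono fun a ha n => ha.mpProdVec_ne 0 n) hmax hmin
    (hmax.integrable_of_nonneg_add hν.toMeasurePreserving hmin hmax_meas hmax₁ hmin₁
      fun n a => maxCoord_add_maxCoord_neg_nonneg _)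
    (hmin.integrable_of_nonneg_add hν.toMeasurePreserving hmax hmin_meas hmin₁ hmax₁
      fun n a => (maxCoord_add_maxCoord_neg_nonneg _).trans_eq (add_comm _ _))

end StationaryErgodicProducts

theorem x_tendsto_iff_y_tendsto
    {d : ℕ} {Ω : Type*} [MeasurableSpace Ω] (μ : Measure Ω) [IsProbabilityMeasure μ]
    (A : ℤ → Ω → Fin d → Fin d → EReal)
    (hA : IsStationaryErgodic A μ)
    (hRmax : ∀ n ω i j, A n ω i j ≠ ⊤)
    (hrow : ∀ n, ∀ᵐ ω ∂μ, ∀ i, ∃ j, A n ω i j ≠ ⊥)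
    (hint : ∀ i, Integrable (fun ω => (mpVec (A 0 ω) 0 i).toReal) μ)
    (γ : EReal)
    (hγ : ∀ᵐ ω ∂μ, Tendsto (fun n : ℕ => (⨆ i, xVec (fun k => A k ω) n i) / (n : EReal))
      atTop (𝓝 γ)) :
    (∀ᵐ ω ∂μ, ∀ i, Tendsto (fun n : ℕ => xVec (fun k => A k ω) n i / (n : EReal))
        atTop (𝓝 γ)) ↔
    (∀ᵐ ω ∂μ, ∀ i, Tendsto (fun n : ℕ => yVec (fun k => A k ω) n i / (n : EReal))
        atTop (𝓝 γ)) := by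
  rcases Nat.eq_zero_or_pos d with rfl | hd
  · simp
  have : NeZero d := ⟨hd.ne'⟩
  have hlaw : Measurable fun ω n => A n ω := measurable_pi_lambda _ hA.measurable
  have : IsProbabilityMeasure (μ.map fun ω n => A n ω) :=
    Measure.isProbabilityMeasure_map hlaw.aemeasurable
  have hfin : ∀ᵐ a ∂(μ.map fun ω n => A n ω), RowFinite a := by
    rw [ae_map_iff hlaw.aemeasurable measurableSet_rowFinite]
    filter_upwards [ae_all_iff.2 hrow] with ω hω n i
    exact ⟨hRmax n ω i, hω n i⟩
  have hint_law (i : Fin d) : Integrable (fun a => (xVec a 1 i).toReal) (μ.map fun ω n => A n ω) :=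
    (integrable_map_measure ((measurable_pi_apply i).comp
      (measurable_xVec 1)).ereal_toReal.aestronglyMeasurable hlaw.aemeasurable).2 (hint i)
  simpa only [ae_map_iff hlaw.aemeasurable (measurableSet_forall_tendsto_div measurable_xVec γ),
    ae_map_iff hlaw.aemeasurable (measurableSet_forall_tendsto_div measurable_yVec γ)] using
    ae_forall_tendsto_xVec_div_iff_yVec (γ := γ) hA.ergodic hfin hint_law
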